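/- For n ≥ r, the right action of the symplectic group Sp(𝔽^{2n}, ω_n) on the space of symplectic embeddings X(2r,n,2r) = {f: 𝔽^{2r} → 𝔽^{2n} linear | f*ω_n = ω_r} is transitive, and the stabilizer of the canonical symplectic embedding is isomorphic to Sp(𝔽^{2(n−r)}, ω_{n−r}); hence X(2r,n,2r) is homeomorphic to the homogeneous space Sp(𝔽^{2n},ω_n)/Sp(𝔽^{2(n−r)},ω_{n−r}). -/

import Mathlib

open Matrix

/-- The canonical symplectic embedding `𝔽^{2r} → 𝔽^{2n}` (for `r ≤ n`), as a matrix. -/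
def canonEmb (𝔽 : Type*) [Field 𝔽] (n r : ℕ) (h : r ≤ n) :
    Matrix (Fin n ⊕ Fin n) (Fin r ⊕ Fin r) 𝔽 :=
  Matrix.of fun p q =>
    match p, q with
    | Sum.inl i, Sum.inl j => if Fin.castLE h j = i then 1 else 0
    | Sum.inr i, Sum.inr j => if Fin.castLE h j = i then 1 else 0
    | _, _ => 0

/-- The stabilizer of the canonical symplectic embedding inside `Sp(𝔽^{2n}, ω_n)`, acting on
embeddings by postcomposition. -/
def stab (𝔽 : Type*) [Field 𝔽] (n r : ℕ) (h : r ≤ n) :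
    Subgroup ↥(Matrix.symplecticGroup (Fin n) 𝔽) where
  carrier := {S | (S : Matrix (Fin n ⊕ Fin n) (Fin n ⊕ Fin n) 𝔽) * canonEmb 𝔽 n r h
    = canonEmb 𝔽 n r h}
  one_mem' := by simp
  mul_mem' := by
    intro a b ha hb
    simp only [Set.mem_setOf_eq, Submonoid.coe_mul] at *
    rw [Matrix.mul_assoc, hb, ha]
  inv_mem' := by
    intro a ha
    simp only [Set.mem_setOf_eq] at *
    calc ((a⁻¹ : _) : Matrix (Fin n ⊕ Fin n) (Fin n ⊕ Fin n) 𝔽) * canonEmb 𝔽 n r h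
        = (↑(a⁻¹) : Matrix (Fin n ⊕ Fin n) (Fin n ⊕ Fin n) 𝔽)
            * ((a : Matrix (Fin n ⊕ Fin n) (Fin n ⊕ Fin n) 𝔽) * canonEmb 𝔽 n r h) := by
          rw [ha]
      _ = ((↑(a⁻¹) : Matrix (Fin n ⊕ Fin n) (Fin n ⊕ Fin n) 𝔽)
            * (a : Matrix (Fin n ⊕ Fin n) (Fin n ⊕ Fin n) 𝔽)) * canonEmb 𝔽 n r h := by
          rw [Matrix.mul_assoc]
      _ = canonEmb 𝔽 n r h := by
          rw [← Submonoid.coe_mul, inv_mul_cancel, OneMemClass.coe_one, Matrix.one_mul]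

/-!
With respect to the symplectic adjoint `A♯`, a matrix `A` is a symplectic embedding exactly when
`A♯ * A = 1`. If `C` and `D` are embeddings onto complementary orthogonal subspaces, a matrix fixing
`C` is symplectic exactly when it has the form `C C♯ + D T D♯` with `T` symplectic, which computes
the stabilizer of `C`.

For the orbit map of an embedding one adds dimensions two at a time. A step of the symplectic
Gram–Schmidt process extends an embedding `M` of `R^{2k}` to one of `R^{2(k+1)}`. It is available
whenever `M` is not onto and depends continuously on `M`, so restriction of embeddings from
`R^{2(k+1)}` to `R^{2k}` is surjective and has continuous local sections; in particular it is open.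
In equal dimensions the orbit map is bijective with continuous inverse `E ↦ E C♯`. Descending
induction shows that every orbit map is surjective and open, hence a quotient map.
-/

open Topology

section

variable {R l k m p : Type*} [CommRing R] [Fintype l] [DecidableEq l] [Fintype k] [DecidableEq k]
  [Fintype m] [DecidableEq m] [Fintype p] [DecidableEq p]

/-- The adjoint of a linear map `R^{2k} → R^{2l}` with respect to the standard symplectic forms. -/
def symplecticAdjoint (A : Matrix (l ⊕ l) (k ⊕ k) R) : Matrix (k ⊕ k) (l ⊕ l) R :=
  -(J k R * Aᵀ * J l R)

local postfix:max "♯" => symplecticAdjoint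

section Adjoint

theorem symplecticAdjoint_fromBlocks (A B C D : Matrix l k R) :
    (fromBlocks A B C D)♯ = fromBlocks Dᵀ (-Bᵀ) (-Cᵀ) Aᵀ := by
  simp [symplecticAdjoint, J, fromBlocks_transpose, fromBlocks_multiply, fromBlocks_neg]

@[simp]
theorem symplecticAdjoint_one : (1 : Matrix (l ⊕ l) (l ⊕ l) R)♯ = 1 := by
  simp [symplecticAdjoint, J_squared]

@[simp]
theorem symplecticAdjoint_symplecticAdjoint (A : Matrix (l ⊕ l) (k ⊕ k) R) : A♯♯ = A := by
  simp only [symplecticAdjoint, transpose_neg, transpose_mul, J_transpose, transpose_transpose,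
    Matrix.neg_mul, Matrix.mul_neg, neg_neg]
  rw [Matrix.mul_assoc, Matrix.mul_assoc, Matrix.mul_assoc, J_squared, ← Matrix.mul_assoc,
    J_squared]
  simp

@[simp]
theorem symplecticAdjoint_mul (A : Matrix (l ⊕ l) (k ⊕ k) R) (B : Matrix (k ⊕ k) (m ⊕ m) R) :
    (A * B)♯ = B♯ * A♯ := by
  have hJ : B♯ * A♯ = J m R * Bᵀ * (J k R * J k R) * Aᵀ * J l R := by
    simp only [symplecticAdjoint, Matrix.neg_mul, Matrix.mul_neg, neg_neg, Matrix.mul_assoc]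
  rw [hJ, J_squared]
  simp [symplecticAdjoint, Matrix.mul_assoc]

@[simp]
theorem symplecticAdjoint_add (A B : Matrix (l ⊕ l) (k ⊕ k) R) : (A + B)♯ = A♯ + B♯ := by
  simp only [symplecticAdjoint, transpose_add, Matrix.mul_add, Matrix.add_mul, neg_add]

@[simp]
theorem symplecticAdjoint_sub (A B : Matrix (l ⊕ l) (k ⊕ k) R) : (A - B)♯ = A♯ - B♯ := by
  simp only [symplecticAdjoint, transpose_sub, Matrix.mul_sub, Matrix.sub_mul, neg_sub_neg, neg_sub]

@[simp]
theorem symplecticAdjoint_zero : (0 : Matrix (l ⊕ l) (k ⊕ k) R)♯ = 0 := by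
  simp [symplecticAdjoint]

theorem symplecticAdjoint_mul_eq_zero_comm {A : Matrix (l ⊕ l) (k ⊕ k) R}
    {B : Matrix (l ⊕ l) (m ⊕ m) R} : A♯ * B = 0 ↔ B♯ * A = 0 := by
  constructor <;> intro h <;> simpa using congrArg symplecticAdjoint h

theorem transpose_mul_J_mul_self (A : Matrix (l ⊕ l) (k ⊕ k) R) :
    Aᵀ * J l R * A = J k R * (A♯ * A) := by
  have hJ : J k R * (A♯ * A) = -(J k R * J k R) * (Aᵀ * J l R * A) := by
    simp only [symplecticAdjoint, Matrix.mul_neg, Matrix.neg_mul, Matrix.mul_assoc]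
  rw [hJ, J_squared, neg_neg, Matrix.one_mul]

theorem symplecticAdjoint_mul_self_eq (A : Matrix (l ⊕ l) (k ⊕ k) R) :
    A♯ * A = -(J k R * (Aᵀ * J l R * A)) := by
  simp only [symplecticAdjoint, Matrix.neg_mul, Matrix.mul_assoc]

theorem symplecticAdjoint_mul_self_eq_one_iff {A : Matrix (l ⊕ l) (k ⊕ k) R} :
    A♯ * A = 1 ↔ Aᵀ * J l R * A = J k R := by
  constructor <;> intro h
  · rw [transpose_mul_J_mul_self, h, Matrix.mul_one]
  · rw [symplecticAdjoint_mul_self_eq, h, J_squared, neg_neg]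

theorem mem_symplecticGroup_iff_symplecticAdjoint_mul_self {A : Matrix (l ⊕ l) (l ⊕ l) R} :
    A ∈ symplecticGroup l R ↔ A♯ * A = 1 :=
  SymplecticGroup.mem_iff'.trans symplecticAdjoint_mul_self_eq_one_iff.symm

theorem coe_inv_eq_symplecticAdjoint (S : symplecticGroup l R) : (S⁻¹).1 = S.1♯ := by
  rw [SymplecticGroup.coe_inv, symplecticAdjoint, Matrix.neg_mul, Matrix.neg_mul]

theorem symplecticAdjoint_mul_self_mul {A : Matrix (l ⊕ l) (k ⊕ k) R}
    {B : Matrix (k ⊕ k) (m ⊕ m) R} (hA : A♯ * A = 1) : (A * B)♯ * (A * B) = B♯ * B := by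
  rw [symplecticAdjoint_mul, Matrix.mul_assoc, ← Matrix.mul_assoc A♯, hA, Matrix.one_mul]

theorem card_le_card_of_symplecticAdjoint_mul_self [Nontrivial R] {A : Matrix (l ⊕ l) (k ⊕ k) R}
    (hA : A♯ * A = 1) : Fintype.card k ≤ Fintype.card l := by
  have h : Fintype.card (k ⊕ k) ≤ Fintype.card (l ⊕ l) := calc
    Fintype.card (k ⊕ k) = (A♯ * A).rank := by rw [hA, rank_one]
    _ ≤ A♯.rank := rank_mul_le_left _ _
    _ ≤ Fintype.card (l ⊕ l) := rank_le_card_width _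
  simp only [Fintype.card_sum] at h
  lia

theorem mul_symplecticAdjoint_self_eq_one_iff [Nontrivial R] {A : Matrix (l ⊕ l) (k ⊕ k) R}
    (hA : A♯ * A = 1) : A * A♯ = 1 ↔ Fintype.card k = Fintype.card l := by
  constructor <;> intro h
  · have := square_of_invertible _ _ hA h
    simp only [Fintype.card_sum] at this
    lia
  · exact (mul_eq_one_comm_of_card_eq (k ⊕ k) (l ⊕ l) R (by simp only [Fintype.card_sum, h])).1 hA

end Adjoint

/-- `C` and `D` are symplectic embeddings of `R^{2k}` and `R^{2m}` that exhibit `R^{2p}` as the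
direct sum of their images; these images are then orthogonal. -/
structure IsSymplecticSplitting (C : Matrix (p ⊕ p) (k ⊕ k) R) (D : Matrix (p ⊕ p) (m ⊕ m) R) :
    Prop where
  left : C♯ * C = 1
  right : D♯ * D = 1
  add_eq_one : C * C♯ + D * D♯ = 1

namespace IsSymplecticSplitting

variable {C : Matrix (p ⊕ p) (k ⊕ k) R} {D : Matrix (p ⊕ p) (m ⊕ m) R}

theorem left_mul_right (h : IsSymplecticSplitting C D) : C♯ * D = 0 := by
  have hsum : C♯ * (C * C♯ + D * D♯) * D = C♯ * D := by rw [h.add_eq_one, Matrix.mul_one]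
  have hexp : C♯ * (C * C♯ + D * D♯) * D = (C♯ * C) * (C♯ * D) + (C♯ * D) * (D♯ * D) := by
    simp only [Matrix.mul_add, Matrix.add_mul, Matrix.mul_assoc]
  rw [hexp, h.left, h.right, Matrix.one_mul, Matrix.mul_one] at hsum
  exact left_eq_add.1 hsum.symm

theorem right_mul_left (h : IsSymplecticSplitting C D) : D♯ * C = 0 :=
  symplecticAdjoint_mul_eq_zero_comm.1 h.left_mul_right

theorem glue_mul_left {q : Type*} (h : IsSymplecticSplitting C D) (M : Matrix q (k ⊕ k) R)
    (W : Matrix q (m ⊕ m) R) : (M * C♯ + W * D♯) * C = M := by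
  rw [Matrix.add_mul, Matrix.mul_assoc, Matrix.mul_assoc, h.left, h.right_mul_left, Matrix.mul_one,
    Matrix.mul_zero, add_zero]

theorem glue_mul_right {q : Type*} (h : IsSymplecticSplitting C D) (M : Matrix q (k ⊕ k) R)
    (W : Matrix q (m ⊕ m) R) : (M * C♯ + W * D♯) * D = W := by
  rw [Matrix.add_mul, Matrix.mul_assoc, Matrix.mul_assoc, h.left_mul_right, h.right,
    Matrix.mul_one, Matrix.mul_zero, zero_add]

theorem glue_restrict {q : Type*} (h : IsSymplecticSplitting C D) (E : Matrix q (p ⊕ p) R) :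
    E * C * C♯ + E * D * D♯ = E := by
  rw [Matrix.mul_assoc, Matrix.mul_assoc, ← Matrix.mul_add, h.add_eq_one, Matrix.mul_one]

theorem symplecticAdjoint_mul_self_glue (h : IsSymplecticSplitting C D)
    {M : Matrix (l ⊕ l) (k ⊕ k) R} {W : Matrix (l ⊕ l) (m ⊕ m) R} (hM : M♯ * M = 1)
    (hW : W♯ * W = 1) (hMW : M♯ * W = 0) :
    (M * C♯ + W * D♯)♯ * (M * C♯ + W * D♯) = 1 := by
  have hWM : W♯ * M = 0 := symplecticAdjoint_mul_eq_zero_comm.1 hMW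
  calc (M * C♯ + W * D♯)♯ * (M * C♯ + W * D♯)
      = C * (M♯ * M) * C♯ + C * (M♯ * W) * D♯ + D * (W♯ * M) * C♯ + D * (W♯ * W) * D♯ := by
        simp only [symplecticAdjoint_add, symplecticAdjoint_mul,
          symplecticAdjoint_symplecticAdjoint, Matrix.add_mul, Matrix.mul_add, Matrix.mul_assoc]
        abel
    _ = C * C♯ + D * D♯ := by simp [hM, hW, hMW, hWM]
    _ = 1 := h.add_eq_one

end IsSymplecticSplitting

section CoordinateEmbedding

variable (R)

/-- The linear map `R^{2k} → R^{2l}` that carries the `i`-th symplectic pair of standard basis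
vectors to the `f i`-th one. -/
def coordinateEmbedding {l k : Type*} [DecidableEq l] (f : k → l) : Matrix (l ⊕ l) (k ⊕ k) R :=
  fromBlocks ((1 : Matrix l l R).submatrix id f) 0 0 ((1 : Matrix l l R).submatrix id f)

theorem symplecticAdjoint_coordinateEmbedding (f : k → l) :
    (coordinateEmbedding R f)♯ =
      fromBlocks ((1 : Matrix l l R).submatrix f id) 0 0 ((1 : Matrix l l R).submatrix f id) := by
  simp only [coordinateEmbedding, symplecticAdjoint_fromBlocks, transpose_zero, neg_zero,
    transpose_submatrix, transpose_one]

theorem symplecticAdjoint_mul_self_coordinateEmbedding {f : k → l} (hf : f.Injective) :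
    (coordinateEmbedding R f)♯ * coordinateEmbedding R f = 1 := by
  have hf' : (1 : Matrix l l R).submatrix f id * (1 : Matrix l l R).submatrix id f = 1 := by
    rw [← submatrix_mul _ _ _ _ _ Function.bijective_id, Matrix.one_mul, submatrix_one f hf]
  rw [symplecticAdjoint_coordinateEmbedding, coordinateEmbedding]
  simp [fromBlocks_multiply, hf']

theorem isSymplecticSplitting_coordinateEmbedding (e : k ⊕ m ≃ p) :
    IsSymplecticSplitting (coordinateEmbedding R (e ∘ Sum.inl))
      (coordinateEmbedding R (e ∘ Sum.inr)) where
  left := symplecticAdjoint_mul_self_coordinateEmbedding R (e.injective.comp Sum.inl_injective)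
  right := symplecticAdjoint_mul_self_coordinateEmbedding R (e.injective.comp Sum.inr_injective)
  add_eq_one := by
    have he : (1 : Matrix p p R).submatrix id (e ∘ Sum.inl) *
          (1 : Matrix p p R).submatrix (e ∘ Sum.inl) id +
        (1 : Matrix p p R).submatrix id (e ∘ Sum.inr) *
          (1 : Matrix p p R).submatrix (e ∘ Sum.inr) id = 1 := calc
      _ = (1 : Matrix p p R).submatrix id e * (1 : Matrix p p R).submatrix e id := by
        ext i j
        simp only [Matrix.add_apply, Matrix.mul_apply, Fintype.sum_sum_type, submatrix_apply]
        rfl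
      _ = 1 := by rw [submatrix_mul_equiv, Matrix.one_mul, submatrix_id_id]
    rw [symplecticAdjoint_coordinateEmbedding, symplecticAdjoint_coordinateEmbedding]
    simp only [coordinateEmbedding, fromBlocks_multiply, fromBlocks_add, Matrix.mul_zero,
      Matrix.zero_mul, add_zero, zero_add, he, fromBlocks_one]

theorem isSymplecticSplitting_some_none :
    IsSymplecticSplitting (coordinateEmbedding R (some : k → Option k))
      (coordinateEmbedding R fun _ : Unit => (none : Option k)) :=
  isSymplecticSplitting_coordinateEmbedding R (Equiv.optionEquivSumPUnit k).symm

end CoordinateEmbedding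

section Plane

/-- The value of the symplectic form on the pair of vectors given by the two columns of `W`, taken
in the order that gives the standard plane the value `1`. -/
def planePairing (W : Matrix (l ⊕ l) (Unit ⊕ Unit) R) : R :=
  (Wᵀ * J l R * W) (Sum.inr ()) (Sum.inl ())

theorem symplecticAdjoint_mul_self_eq_planePairing_smul (W : Matrix (l ⊕ l) (Unit ⊕ Unit) R) :
    W♯ * W = planePairing W • 1 := by
  obtain ⟨A, B, C, D, rfl⟩ : ∃ A B C D, W = fromBlocks A B C D :=
    ⟨_, _, _, _, (fromBlocks_toBlocks W).symm⟩
  rw [symplecticAdjoint_fromBlocks]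
  ext (i | i) (j | j) <;>
    simp [planePairing, J, fromBlocks_transpose, fromBlocks_multiply, Matrix.mul_apply, mul_comm,
      add_comm, Finset.sum_neg_distrib]

/-- The map of the symplectic plane that fixes the first standard basis vector and multiplies the
second one by `c`. -/
def scaleSecond (c : R) : Matrix (Unit ⊕ Unit) (Unit ⊕ Unit) R :=
  fromBlocks 1 0 0 (c • 1)

theorem symplecticAdjoint_mul_self_scaleSecond (c : R) :
    (scaleSecond c)♯ * scaleSecond c = c • 1 := by
  rw [scaleSecond, symplecticAdjoint_fromBlocks]
  simp [fromBlocks_multiply, ← fromBlocks_one, fromBlocks_smul]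

variable {K : Type*} [Field K]

theorem symplecticAdjoint_mul_self_mul_scaleSecond_inv {W : Matrix (l ⊕ l) (Unit ⊕ Unit) K}
    (hW : planePairing W ≠ 0) :
    (W * scaleSecond (planePairing W)⁻¹)♯ * (W * scaleSecond (planePairing W)⁻¹) = 1 := by
  set c := planePairing W
  calc (W * scaleSecond c⁻¹)♯ * (W * scaleSecond c⁻¹)
      = (scaleSecond c⁻¹)♯ * (W♯ * W) * scaleSecond c⁻¹ := by
        simp only [symplecticAdjoint_mul, Matrix.mul_assoc]
    _ = c • ((scaleSecond c⁻¹)♯ * scaleSecond c⁻¹) := by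
        rw [symplecticAdjoint_mul_self_eq_planePairing_smul, Matrix.mul_smul, Matrix.smul_mul,
          Matrix.mul_one]
    _ = 1 := by rw [symplecticAdjoint_mul_self_scaleSecond, smul_smul, mul_inv_cancel₀ hW, one_smul]

end Plane

section Extension

variable {K : Type*} [Field K]

/-- The symplectic orthogonal projection onto the complement of the image of `M`. -/
def orthogonalComplementProj (M : Matrix (l ⊕ l) (k ⊕ k) R) : Matrix (l ⊕ l) (l ⊕ l) R :=
  1 - M * M♯

theorem symplecticAdjoint_orthogonalComplementProj (M : Matrix (l ⊕ l) (k ⊕ k) R) :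
    (orthogonalComplementProj M)♯ = orthogonalComplementProj M := by
  simp [orthogonalComplementProj]

theorem symplecticAdjoint_mul_orthogonalComplementProj {M : Matrix (l ⊕ l) (k ⊕ k) R}
    (hM : M♯ * M = 1) : M♯ * orthogonalComplementProj M = 0 := by
  rw [orthogonalComplementProj, Matrix.mul_sub, ← Matrix.mul_assoc, hM, Matrix.mul_one,
    Matrix.one_mul, sub_self]

theorem orthogonalComplementProj_mul_of_symplecticAdjoint_mul_eq_zero
    {M : Matrix (l ⊕ l) (k ⊕ k) R} {n : Type*} {W : Matrix (l ⊕ l) n R} (h : M♯ * W = 0) :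
    orthogonalComplementProj M * W = W := by
  rw [orthogonalComplementProj, Matrix.sub_mul, Matrix.mul_assoc, h, Matrix.one_mul,
    Matrix.mul_zero, sub_zero]

theorem exists_planePairing_mul_ne_zero {A : Matrix (l ⊕ l) (k ⊕ k) R} (hA : A♯ * A ≠ 0) :
    ∃ W : Matrix (k ⊕ k) (Unit ⊕ Unit) R, planePairing (A * W) ≠ 0 := by
  have hform : Aᵀ * J l R * A ≠ 0 := fun h => hA <| by
    rw [symplecticAdjoint_mul_self_eq, h, Matrix.mul_zero, neg_zero]
  obtain ⟨i, j, hij⟩ : ∃ i j, (Aᵀ * J l R * A) i j ≠ 0 := by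
    by_contra! h
    exact hform (Matrix.ext h)
  let cols : Unit ⊕ Unit → k ⊕ k := Sum.elim (fun _ => j) (fun _ => i)
  have hcols : A * (1 : Matrix (k ⊕ k) (k ⊕ k) R).submatrix id cols = A.submatrix id cols := by
    ext a b
    simp [Matrix.mul_apply, Matrix.one_apply]
  refine ⟨(1 : Matrix (k ⊕ k) (k ⊕ k) R).submatrix id cols, ?_⟩
  rw [hcols]
  exact hij

theorem exists_planePairing_orthogonalComplementProj_mul_ne_zero [Nontrivial R]
    {M : Matrix (l ⊕ l) (k ⊕ k) R} (hM : M♯ * M = 1) (hcard : Fintype.card k < Fintype.card l) :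
    ∃ W : Matrix (l ⊕ l) (Unit ⊕ Unit) R, planePairing (orthogonalComplementProj M * W) ≠ 0 := by
  have hne : orthogonalComplementProj M ≠ 0 := fun h =>
    hcard.ne ((mul_symplecticAdjoint_self_eq_one_iff hM).1 (sub_eq_zero.1 h).symm)
  apply exists_planePairing_mul_ne_zero
  rwa [symplecticAdjoint_orthogonalComplementProj,
    orthogonalComplementProj_mul_of_symplecticAdjoint_mul_eq_zero
      (symplecticAdjoint_mul_orthogonalComplementProj hM)]

/-- Completes the symplectic embedding `M` by the symplectic plane obtained from `W` by one step of
the symplectic Gram–Schmidt process. The splitting `(C, D)` places both in a common source; the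
result is symplectic where the pairing that is inverted does not vanish. -/
def gramSchmidtExtend (C : Matrix (p ⊕ p) (k ⊕ k) K) (D : Matrix (p ⊕ p) (Unit ⊕ Unit) K)
    (W : Matrix (l ⊕ l) (Unit ⊕ Unit) K) (M : Matrix (l ⊕ l) (k ⊕ k) K) :
    Matrix (l ⊕ l) (p ⊕ p) K :=
  M * C♯ + orthogonalComplementProj M * W *
    scaleSecond (planePairing (orthogonalComplementProj M * W))⁻¹ * D♯

namespace IsSymplecticSplitting

variable {C : Matrix (p ⊕ p) (k ⊕ k) K} {D : Matrix (p ⊕ p) (Unit ⊕ Unit) K}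

theorem gramSchmidtExtend_mul_left (h : IsSymplecticSplitting C D)
    (W : Matrix (l ⊕ l) (Unit ⊕ Unit) K) (M : Matrix (l ⊕ l) (k ⊕ k) K) :
    gramSchmidtExtend C D W M * C = M :=
  h.glue_mul_left _ _

theorem symplecticAdjoint_mul_self_gramSchmidtExtend (h : IsSymplecticSplitting C D)
    {W : Matrix (l ⊕ l) (Unit ⊕ Unit) K} {M : Matrix (l ⊕ l) (k ⊕ k) K} (hM : M♯ * M = 1)
    (hW : planePairing (orthogonalComplementProj M * W) ≠ 0) :
    (gramSchmidtExtend C D W M)♯ * gramSchmidtExtend C D W M = 1 := by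
  refine h.symplecticAdjoint_mul_self_glue hM (symplecticAdjoint_mul_self_mul_scaleSecond_inv hW) ?_
  rw [← Matrix.mul_assoc, ← Matrix.mul_assoc, symplecticAdjoint_mul_orthogonalComplementProj hM,
    Matrix.zero_mul, Matrix.zero_mul]

theorem orthogonalComplementProj_restrict (h : IsSymplecticSplitting C D)
    {E : Matrix (l ⊕ l) (p ⊕ p) K} (hE : E♯ * E = 1) :
    orthogonalComplementProj (E * C) * (E * D) = E * D := by
  apply orthogonalComplementProj_mul_of_symplecticAdjoint_mul_eq_zero
  rw [symplecticAdjoint_mul, Matrix.mul_assoc, ← Matrix.mul_assoc E♯, hE, Matrix.one_mul,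
    h.left_mul_right]

theorem planePairing_restrict (h : IsSymplecticSplitting C D)
    {E : Matrix (l ⊕ l) (p ⊕ p) K} (hE : E♯ * E = 1) : planePairing (E * D) = 1 := by
  have hED : (E * D)♯ * (E * D) = 1 := (symplecticAdjoint_mul_self_mul hE).trans h.right
  rw [planePairing, symplecticAdjoint_mul_self_eq_one_iff.1 hED]
  simp [J]

theorem gramSchmidtExtend_restrict (h : IsSymplecticSplitting C D)
    {E : Matrix (l ⊕ l) (p ⊕ p) K} (hE : E♯ * E = 1) :
    gramSchmidtExtend C D (E * D) (E * C) = E := by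
  rw [gramSchmidtExtend, h.orthogonalComplementProj_restrict hE, h.planePairing_restrict hE,
    inv_one, scaleSecond, one_smul, fromBlocks_one, Matrix.mul_one, h.glue_restrict]

end IsSymplecticSplitting

end Extension

section Continuity

variable {K : Type*} [Field K] [TopologicalSpace K] [IsTopologicalDivisionRing K]

@[fun_prop]
theorem continuous_symplecticAdjoint [TopologicalSpace R] [IsTopologicalRing R] :
    Continuous (symplecticAdjoint : Matrix (l ⊕ l) (k ⊕ k) R → Matrix (k ⊕ k) (l ⊕ l) R) := by
  unfold symplecticAdjoint
  fun_prop

@[fun_prop]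
theorem continuous_orthogonalComplementProj [TopologicalSpace R] [IsTopologicalRing R] :
    Continuous (orthogonalComplementProj : Matrix (l ⊕ l) (k ⊕ k) R → _) := by
  unfold orthogonalComplementProj
  fun_prop

@[fun_prop]
theorem continuous_planePairing [TopologicalSpace R] [IsTopologicalRing R] :
    Continuous (planePairing : Matrix (l ⊕ l) (Unit ⊕ Unit) R → R) := by
  unfold planePairing
  fun_prop

@[fun_prop]
theorem continuous_scaleSecond [TopologicalSpace R] [IsTopologicalRing R] :
    Continuous (scaleSecond : R → Matrix (Unit ⊕ Unit) (Unit ⊕ Unit) R) := by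
  unfold scaleSecond
  fun_prop

theorem continuousAt_gramSchmidtExtend {C : Matrix (p ⊕ p) (k ⊕ k) K}
    {D : Matrix (p ⊕ p) (Unit ⊕ Unit) K} {W : Matrix (l ⊕ l) (Unit ⊕ Unit) K}
    {M : Matrix (l ⊕ l) (k ⊕ k) K} (hW : planePairing (orthogonalComplementProj M * W) ≠ 0) :
    ContinuousAt (gramSchmidtExtend C D W) M := by
  unfold gramSchmidtExtend
  fun_prop (disch := exact hW)

end Continuity

variable (R l k) in
/-- The space of linear maps `R^{2k} → R^{2l}` that pull the standard symplectic form back to the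
standard symplectic form. -/
abbrev SymplecticEmbedding : Type _ :=
  {M : Matrix (l ⊕ l) (k ⊕ k) R // Mᵀ * J l R * M = J k R}

namespace SymplecticEmbedding

theorem symplecticAdjoint_mul_self (E : SymplecticEmbedding R l k) : E.1♯ * E.1 = 1 :=
  symplecticAdjoint_mul_self_eq_one_iff.2 E.2

/-- The composite of two symplectic embeddings. -/
def comp (E : SymplecticEmbedding R l p) (C : SymplecticEmbedding R p k) :
    SymplecticEmbedding R l k :=
  ⟨E.1 * C.1, symplecticAdjoint_mul_self_eq_one_iff.1 <|
    (symplecticAdjoint_mul_self_mul E.symplecticAdjoint_mul_self).trans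
      C.symplecticAdjoint_mul_self⟩

/-- The action of the symplectic group on symplectic embeddings by postcomposition. -/
instance : MulAction (symplecticGroup l R) (SymplecticEmbedding R l k) where
  smul S E := comp ⟨S.1, SymplecticGroup.mem_iff'.1 S.2⟩ E
  one_smul E := Subtype.ext (Matrix.one_mul E.1)
  mul_smul S T E := Subtype.ext (Matrix.mul_assoc S.1 T.1 E.1)

theorem smul_comp (S : symplecticGroup l R) (E : SymplecticEmbedding R l p)
    (C : SymplecticEmbedding R p k) : S • E.comp C = (S • E).comp C :=
  Subtype.ext (Matrix.mul_assoc S.1 E.1 C.1).symm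

variable (R) in
/-- The coordinate embedding of an injective map of index types, as a symplectic embedding. -/
def coordinate (f : k → l) (hf : f.Injective) : SymplecticEmbedding R l k :=
  ⟨coordinateEmbedding R f, symplecticAdjoint_mul_self_eq_one_iff.1 <|
    symplecticAdjoint_mul_self_coordinateEmbedding R hf⟩

section Stabilizer

variable {C : SymplecticEmbedding R p k} {D : Matrix (p ⊕ p) (m ⊕ m) R} {S : symplecticGroup p R}

theorem mem_stabilizer_iff : S ∈ MulAction.stabilizer _ C ↔ S.1 * C.1 = C.1 :=
  MulAction.mem_stabilizer_iff.trans Subtype.ext_iff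

theorem symplecticAdjoint_mul_of_mem_stabilizer (hS : S ∈ MulAction.stabilizer _ C) :
    C.1♯ * S.1 = C.1♯ := by
  have hinv : S.1♯ * C.1 = C.1 := by
    rw [← coe_inv_eq_symplecticAdjoint]
    exact mem_stabilizer_iff.1 (inv_mem hS)
  simpa only [symplecticAdjoint_mul, symplecticAdjoint_symplecticAdjoint] using
    congrArg symplecticAdjoint hinv

theorem mul_right_eq_of_mem_stabilizer (h : IsSymplecticSplitting C.1 D)
    (hS : S ∈ MulAction.stabilizer _ C) : D * (D♯ * S.1 * D) = S.1 * D := by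
  have hCS : C.1♯ * (S.1 * D) = 0 := by
    rw [← Matrix.mul_assoc, symplecticAdjoint_mul_of_mem_stabilizer hS, h.left_mul_right]
  calc D * (D♯ * S.1 * D) = C.1 * (C.1♯ * (S.1 * D)) + D * (D♯ * S.1 * D) := by
        rw [hCS, Matrix.mul_zero, zero_add]
    _ = (C.1 * C.1♯ + D * D♯) * (S.1 * D) := by simp only [Matrix.add_mul, Matrix.mul_assoc]
    _ = S.1 * D := by rw [h.add_eq_one, Matrix.one_mul]

theorem glue_eq_of_mem_stabilizer (h : IsSymplecticSplitting C.1 D)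
    (hS : S ∈ MulAction.stabilizer _ C) : C.1 * C.1♯ + D * (D♯ * S.1 * D) * D♯ = S.1 := by
  rw [mul_right_eq_of_mem_stabilizer h hS]
  nth_rw 1 [← mem_stabilizer_iff.1 hS]
  exact h.glue_restrict S.1

theorem restrict_mem_symplecticGroup (h : IsSymplecticSplitting C.1 D)
    (hS : S ∈ MulAction.stabilizer _ C) : D♯ * S.1 * D ∈ symplecticGroup m R := by
  rw [mem_symplecticGroup_iff_symplecticAdjoint_mul_self, ← symplecticAdjoint_mul_self_mul h.right,
    mul_right_eq_of_mem_stabilizer h hS,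
    symplecticAdjoint_mul_self_mul (mem_symplecticGroup_iff_symplecticAdjoint_mul_self.1 S.2),
    h.right]

theorem glue_mem_symplecticGroup (h : IsSymplecticSplitting C.1 D) (T : symplecticGroup m R) :
    C.1 * C.1♯ + D * T.1 * D♯ ∈ symplecticGroup p R := by
  rw [mem_symplecticGroup_iff_symplecticAdjoint_mul_self]
  refine h.symplecticAdjoint_mul_self_glue h.left ?_ ?_
  · rw [symplecticAdjoint_mul_self_mul h.right,
      mem_symplecticGroup_iff_symplecticAdjoint_mul_self.1 T.2]
  · rw [← Matrix.mul_assoc, h.left_mul_right, Matrix.zero_mul]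

/-- The isomorphism of the stabilizer of the first summand of a symplectic splitting with the
symplectic group of the second summand, given by restriction. -/
def stabilizerEquiv (h : IsSymplecticSplitting C.1 D) :
    MulAction.stabilizer (symplecticGroup p R) C ≃* symplecticGroup m R where
  toFun S := ⟨D♯ * S.1.1 * D, restrict_mem_symplecticGroup h S.2⟩
  invFun T := ⟨⟨C.1 * C.1♯ + D * T.1 * D♯, glue_mem_symplecticGroup h T⟩,
    mem_stabilizer_iff.2 (h.glue_mul_left _ _)⟩
  left_inv S := Subtype.ext (Subtype.ext (glue_eq_of_mem_stabilizer h S.2))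
  right_inv T := Subtype.ext <| by
    change D♯ * (C.1 * C.1♯ + D * T.1 * D♯) * D = T.1
    rw [Matrix.mul_assoc, h.glue_mul_right, ← Matrix.mul_assoc, h.right, Matrix.one_mul]
  map_mul' S T := Subtype.ext <| by
    change D♯ * (S.1.1 * T.1.1) * D = D♯ * S.1.1 * D * (D♯ * T.1.1 * D)
    rw [Matrix.mul_assoc _ D, mul_right_eq_of_mem_stabilizer h T.2]
    simp only [Matrix.mul_assoc]

end Stabilizer

/-- Postcomposition with symplectic matrices identifies the symplectic group with the symplectic
embeddings of a space of the same dimension, once one of them, `C`, is chosen. -/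
def symplecticGroupEquiv (C : SymplecticEmbedding R l k) (hC : C.1 * C.1♯ = 1) :
    symplecticGroup l R ≃ SymplecticEmbedding R l k where
  toFun S := S • C
  invFun E := ⟨E.1 * C.1♯, mem_symplecticGroup_iff_symplecticAdjoint_mul_self.2 <| by
    rw [symplecticAdjoint_mul_self_mul E.symplecticAdjoint_mul_self,
      symplecticAdjoint_symplecticAdjoint, hC]⟩
  left_inv S := Subtype.ext <| by
    change S.1 * C.1 * C.1♯ = S.1
    rw [Matrix.mul_assoc, hC, Matrix.mul_one]
  right_inv E := Subtype.ext <| by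
    change E.1 * C.1♯ * C.1 = E.1
    rw [Matrix.mul_assoc, C.symplecticAdjoint_mul_self, Matrix.mul_one]

theorem isOpenMap_symplecticGroupEquiv [TopologicalSpace R] [IsTopologicalRing R]
    (C : SymplecticEmbedding R l k) (hC : C.1 * C.1♯ = 1) :
    IsOpenMap (symplecticGroupEquiv C hC) :=
  have hinv : Continuous (symplecticGroupEquiv C hC).symm :=
    (continuous_subtype_val.matrix_mul continuous_const).subtype_mk _
  .of_inverse hinv (symplecticGroupEquiv C hC).right_inv (symplecticGroupEquiv C hC).left_inv

section Restriction

variable {K : Type*} [Field K] {C : SymplecticEmbedding K p k}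
  {D : Matrix (p ⊕ p) (Unit ⊕ Unit) K}

/-- The Gram–Schmidt extension of the symplectic embedding `M` by `W`, as a symplectic embedding. -/
def extend (h : IsSymplecticSplitting C.1 D) (M : SymplecticEmbedding K l k)
    {W : Matrix (l ⊕ l) (Unit ⊕ Unit) K}
    (hW : planePairing (orthogonalComplementProj M.1 * W) ≠ 0) : SymplecticEmbedding K l p :=
  ⟨gramSchmidtExtend C.1 D W M.1, symplecticAdjoint_mul_self_eq_one_iff.1 <|
    h.symplecticAdjoint_mul_self_gramSchmidtExtend M.symplecticAdjoint_mul_self hW⟩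

theorem extend_comp (h : IsSymplecticSplitting C.1 D) (M : SymplecticEmbedding K l k)
    {W : Matrix (l ⊕ l) (Unit ⊕ Unit) K}
    (hW : planePairing (orthogonalComplementProj M.1 * W) ≠ 0) : (extend h M hW).comp C = M :=
  Subtype.ext (h.gramSchmidtExtend_mul_left W M.1)

theorem surjective_comp (h : IsSymplecticSplitting C.1 D)
    (hcard : Fintype.card k < Fintype.card l) :
    Function.Surjective fun E : SymplecticEmbedding K l p => E.comp C := fun M => by
  obtain ⟨W, hW⟩ :=
    exists_planePairing_orthogonalComplementProj_mul_ne_zero M.symplecticAdjoint_mul_self hcard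
  exact ⟨extend h M hW, extend_comp h M hW⟩

-- For fixed `W = E D` the Gram–Schmidt extension is a continuous local section through `E`.
theorem isOpenMap_comp [TopologicalSpace K] [IsTopologicalDivisionRing K] [T1Space K]
    (h : IsSymplecticSplitting C.1 D) :
    IsOpenMap fun E : SymplecticEmbedding K l p => E.comp C := by
  refine isOpenMap_iff_nhds_le.2 fun E U hU => ?_
  obtain ⟨V, hV, hVU⟩ := (mem_nhds_induced _ _ _).1 hU
  let W := E.1 * D
  have hE := E.symplecticAdjoint_mul_self
  have hpair : planePairing (orthogonalComplementProj (E.1 * C.1) * W) ≠ 0 := by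
    rw [h.orthogonalComplementProj_restrict hE, h.planePairing_restrict hE]
    exact one_ne_zero
  have hpair_nhds : ∀ᶠ M in 𝓝 (E.1 * C.1), planePairing (orthogonalComplementProj M * W) ≠ 0 :=
    ContinuousAt.eventually_ne (by fun_prop) hpair
  have hextend_nhds : ∀ᶠ M in 𝓝 (E.1 * C.1), gramSchmidtExtend C.1 D W M ∈ V := by
    refine continuousAt_gramSchmidtExtend hpair ?_
    rwa [h.gramSchmidtExtend_restrict hE]
  filter_upwards [continuousAt_subtype_val.eventually hpair_nhds,
    continuousAt_subtype_val.eventually hextend_nhds] with M hMpair hMV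
  have hmem : (extend h M hMpair).comp C ∈ U := hVU hMV
  rwa [extend_comp] at hmem

end Restriction

section Orbit

universe u

variable {K : Type*} [Field K]

theorem card_lt_card_of_option (C : SymplecticEmbedding K l (Option k)) :
    Fintype.card k < Fintype.card l := by
  have h := card_le_card_of_symplecticAdjoint_mul_self C.symplecticAdjoint_mul_self
  rwa [Fintype.card_option] at h

theorem restrict_induction
    {motive : ∀ (k : Type u) [Fintype k] [DecidableEq k], SymplecticEmbedding K l k → Prop}
    (iso : ∀ (k : Type u) [Fintype k] [DecidableEq k] (C : SymplecticEmbedding K l k),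
      C.1 * C.1♯ = 1 → motive k C)
    (restrict : ∀ (k : Type u) [Fintype k] [DecidableEq k]
      (C : SymplecticEmbedding K l (Option k)), motive (Option k) C →
        motive k (C.comp (coordinate K some (Option.some_injective k))))
    {k : Type u} [Fintype k] [DecidableEq k] (C : SymplecticEmbedding K l k) : motive k C := by
  induction hd : Fintype.card l - Fintype.card k generalizing k with
  | zero =>
    have hle := card_le_card_of_symplecticAdjoint_mul_self C.symplecticAdjoint_mul_self
    refine iso k C <| (mul_symplecticAdjoint_self_eq_one_iff C.symplecticAdjoint_mul_self).2 ?_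
    lia
  | succ d ih =>
    obtain ⟨C', rfl⟩ := surjective_comp (C := coordinate K some (Option.some_injective k))
      (isSymplecticSplitting_some_none K) (by lia) C
    refine restrict k C' (ih C' ?_)
    rw [Fintype.card_option]
    lia

theorem surjective_smul {k : Type u} [Fintype k] [DecidableEq k] (C : SymplecticEmbedding K l k) :
    Function.Surjective fun S : symplecticGroup l K => S • C := by
  refine restrict_induction
    (motive := fun _ _ _ C => Function.Surjective fun S : symplecticGroup l K => S • C) ?_ ?_ C
  · exact fun _ _ _ C hC => (symplecticGroupEquiv C hC).surjective
  · intro k _ _ C ih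
    simp only [smul_comp]
    exact (surjective_comp (isSymplecticSplitting_some_none K) C.card_lt_card_of_option).comp ih

instance : MulAction.IsPretransitive (symplecticGroup l K) (SymplecticEmbedding K l k) :=
  ⟨fun C => C.surjective_smul⟩

theorem continuous_smul [TopologicalSpace R] [IsTopologicalRing R]
    (C : SymplecticEmbedding R l k) : Continuous fun S : symplecticGroup l R => S • C :=
  (continuous_subtype_val.matrix_mul continuous_const).subtype_mk _

variable [TopologicalSpace K] [IsTopologicalDivisionRing K] [T1Space K]

theorem isOpenMap_smul (C : SymplecticEmbedding K l k) :
    IsOpenMap fun S : symplecticGroup l K => S • C := by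
  refine restrict_induction
    (motive := fun _ _ _ C => IsOpenMap fun S : symplecticGroup l K => S • C) ?_ ?_ C
  · exact fun _ _ _ => isOpenMap_symplecticGroupEquiv
  · intro k _ _ C ih
    simp only [smul_comp]
    exact (isOpenMap_comp (isSymplecticSplitting_some_none K)).comp ih

end Orbit

end SymplecticEmbedding

section HomogeneousSpace

variable {G X : Type*} [Group G] [MulAction G X] {x : X}

theorem bijective_ofQuotientStabilizer (hx : (fun g : G => g • x).Surjective) :
    (MulAction.ofQuotientStabilizer G x).Bijective :=
  ⟨MulAction.injective_ofQuotientStabilizer G x, fun y =>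
    let ⟨g, hg⟩ := hx y
    ⟨g, hg⟩⟩

/-- A space on which the orbit map of `x` is a quotient map is the homogeneous space of the
stabilizer of `x`. -/
noncomputable def quotientStabilizerHomeomorph [TopologicalSpace G] [TopologicalSpace X]
    (hx : IsQuotientMap fun g : G => g • x) : G ⧸ MulAction.stabilizer G x ≃ₜ X where
  toEquiv := .ofBijective _ (bijective_ofQuotientStabilizer hx.surjective)
  continuous_toFun := (QuotientGroup.isQuotientMap_mk _).continuous_iff.2 hx.continuous
  continuous_invFun := by
    refine hx.continuous_iff.2 ((QuotientGroup.isQuotientMap_mk _).continuous.congr fun g => ?_)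
    exact (Equiv.ofBijective_symm_apply_apply _
      (bijective_ofQuotientStabilizer hx.surjective) (g : G ⧸ MulAction.stabilizer G x)).symm

end HomogeneousSpace

section Canonical

variable {K : Type*} [Field K] {n r : ℕ} (h : r ≤ n)

theorem canonEmb_eq_coordinateEmbedding :
    canonEmb K n r h = coordinateEmbedding K (Fin.castLE h) := by
  ext (i | i) (j | j) <;>
    simp [canonEmb, coordinateEmbedding, Matrix.one_apply, eq_comm]

variable (K) in
/-- `canonEmb` as a point of the space of symplectic embeddings. -/
def canonicalEmbedding : SymplecticEmbedding K (Fin n) (Fin r) :=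
  ⟨canonEmb K n r h, by
    rw [canonEmb_eq_coordinateEmbedding]
    exact (SymplecticEmbedding.coordinate K _ (Fin.castLE_injective h)).2⟩

theorem stab_eq_stabilizer : stab K n r h = MulAction.stabilizer _ (canonicalEmbedding K h) :=
  Subgroup.ext fun _ =>
    (SymplecticEmbedding.mem_stabilizer_iff (C := canonicalEmbedding K h)).symm

theorem exists_isSymplecticSplitting_canonEmb : ∃ D : Matrix _ (Fin (n - r) ⊕ Fin (n - r)) K,
    IsSymplecticSplitting (canonEmb K n r h) D := by
  let e : Fin r ⊕ Fin (n - r) ≃ Fin n := finSumFinEquiv.trans (finCongr (Nat.add_sub_cancel' h))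
  have he : e ∘ Sum.inl = Fin.castLE h := rfl
  rw [canonEmb_eq_coordinateEmbedding, ← he]
  exact ⟨_, isSymplecticSplitting_coordinateEmbedding K e⟩

end Canonical

end

theorem stmt8_general {𝔽 : Type*} [Field 𝔽] [TopologicalSpace 𝔽] [IsTopologicalDivisionRing 𝔽]
    [T1Space 𝔽] (n r : ℕ) (h : r ≤ n) :
    ((canonEmb 𝔽 n r h)ᵀ * Matrix.J (Fin n) 𝔽 * canonEmb 𝔽 n r h = Matrix.J (Fin r) 𝔽)
      ∧ (∀ M M' : {M : Matrix (Fin n ⊕ Fin n) (Fin r ⊕ Fin r) 𝔽 //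
            Mᵀ * Matrix.J (Fin n) 𝔽 * M = Matrix.J (Fin r) 𝔽},
          ∃ S : ↥(Matrix.symplecticGroup (Fin n) 𝔽),
            (S : Matrix (Fin n ⊕ Fin n) (Fin n ⊕ Fin n) 𝔽) * M'.1 = M.1)
      ∧ Nonempty (↥(stab 𝔽 n r h) ≃* ↥(Matrix.symplecticGroup (Fin (n - r)) 𝔽))
      ∧ Nonempty
          ({M : Matrix (Fin n ⊕ Fin n) (Fin r ⊕ Fin r) 𝔽 //
              Mᵀ * Matrix.J (Fin n) 𝔽 * M = Matrix.J (Fin r) 𝔽}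
            ≃ₜ (↥(Matrix.symplecticGroup (Fin n) 𝔽) ⧸ stab 𝔽 n r h)) := by
  let C := canonicalEmbedding 𝔽 h
  obtain ⟨D, hD⟩ := exists_isSymplecticSplitting_canonEmb (K := 𝔽) h
  rw [stab_eq_stabilizer]
  refine ⟨C.2, fun M M' => ?_, ⟨SymplecticEmbedding.stabilizerEquiv (C := C) hD⟩,
    ⟨(quotientStabilizerHomeomorph ?_).symm⟩⟩
  · exact (MulAction.exists_smul_eq (symplecticGroup (Fin n) 𝔽) M' M).imp fun _ =>
      congrArg Subtype.val
  · exact C.isOpenMap_smul.isQuotientMap C.continuous_smul C.surjective_smul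

/-- For `n ≥ r`, the right action of `Sp(𝔽^{2n}, ω_n)` (by postcomposition) on the space
`X(2r,n,2r)` of symplectic embeddings `𝔽^{2r} → 𝔽^{2n}` is transitive, the canonical
embedding is symplectic and its stabilizer is isomorphic (as a group) to
`Sp(𝔽^{2(n−r)}, ω_{n−r})`; hence `X(2r,n,2r)` is homeomorphic to the homogeneous space
`Sp(𝔽^{2n},ω_n)/Sp(𝔽^{2(n−r)},ω_{n−r})`. -/
theorem stmt8 {𝔽 : Type*} [RCLike 𝔽] (n r : ℕ) (h : r ≤ n) :
    ((canonEmb 𝔽 n r h)ᵀ * Matrix.J (Fin n) 𝔽 * canonEmb 𝔽 n r h = Matrix.J (Fin r) 𝔽)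
      ∧ (∀ M M' : {M : Matrix (Fin n ⊕ Fin n) (Fin r ⊕ Fin r) 𝔽 //
            Mᵀ * Matrix.J (Fin n) 𝔽 * M = Matrix.J (Fin r) 𝔽},
          ∃ S : ↥(Matrix.symplecticGroup (Fin n) 𝔽),
            (S : Matrix (Fin n ⊕ Fin n) (Fin n ⊕ Fin n) 𝔽) * M'.1 = M.1)
      ∧ Nonempty (↥(stab 𝔽 n r h) ≃* ↥(Matrix.symplecticGroup (Fin (n - r)) 𝔽))
      ∧ Nonempty
          ({M : Matrix (Fin n ⊕ Fin n) (Fin r ⊕ Fin r) 𝔽 //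
              Mᵀ * Matrix.J (Fin n) 𝔽 * M = Matrix.J (Fin r) 𝔽}
            ≃ₜ (↥(Matrix.symplecticGroup (Fin n) 𝔽) ⧸ stab 𝔽 n r h)) :=
  stmt8_general n r h
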